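/- Let q and t be real numbers with q > 1, t > 0, and q³·t² < 1. Then the double series ∑_{X≥1} ∑_{Y≥1} q^{3X − Y} · t^{3X − min(X, 3Y)} converges and satisfies (1 − q⁻¹)² · ∑_{X≥1} ∑_{Y≥1} q^{3X − Y} · t^{3X − min(X, 3Y)} = (1 − q⁻¹) · q²·t²·(1 + q³·t² − q³·t³ + q⁶·t⁴ − q⁶·t⁵ − q⁸·t⁷) / ((1 − q³·t³)·(1 − q⁸·t⁶)). -/

import Mathlib

/-- A series over the positive integers is the corresponding series over `ℕ` shifted by one. -/
lemma hasSum_pnat_iff_hasSum_nat_succ {f : ℕ → ℝ} {s : ℝ} :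
    HasSum (fun n : ℕ+ => f n) s ↔ HasSum (fun n : ℕ => f (n + 1)) s := by
  rw [← Equiv.pnatEquivNat.symm.hasSum_iff]
  simp [Function.comp_def]

lemma hasSum_pnat_geometric {r : ℝ} (h₀ : 0 ≤ r) (h₁ : r < 1) :
    HasSum (fun n : ℕ+ => r ^ (n : ℕ)) (r / (1 - r)) := by
  rw [hasSum_pnat_iff_hasSum_nat_succ (f := fun n => r ^ n)]
  simpa only [pow_succ', div_eq_mul_inv] using (hasSum_geometric_of_lt_one h₀ h₁).mul_left r

/-- A series that is geometric of ratio `a` up to index `m`, and geometric of ratio `b`,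
scaled by `k`, beyond it. -/
lemma hasSum_pnat_piecewise_geometric {a b k : ℝ} (m : ℕ) (ha : a ≠ 1) (hb₀ : 0 ≤ b)
    (hb₁ : b < 1) (hk : k * b ^ m = a ^ m) :
    HasSum (fun n : ℕ+ => if (n : ℕ) ≤ m then a ^ (n : ℕ) else k * b ^ (n : ℕ))
      (a / (1 - a) + a ^ m * (b / (1 - b) - a / (1 - a))) := by
  rw [hasSum_pnat_iff_hasSum_nat_succ (f := fun n => if n ≤ m then a ^ n else k * b ^ n),
    ← hasSum_nat_add_iff' m]
  have hfin : ∑ i ∈ Finset.range m, (if i + 1 ≤ m then a ^ (i + 1) else k * b ^ (i + 1)) =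
      a * (1 - a ^ m) / (1 - a) := by
    rw [Finset.sum_congr rfl fun i hi => if_pos (Nat.succ_le_of_lt (Finset.mem_range.1 hi))]
    simp only [pow_succ']
    rw [← Finset.mul_sum, geom_sum_eq ha, mul_div_assoc, ← neg_div_neg_eq, neg_sub, neg_sub]
  have htail : ∀ n : ℕ, (if n + m + 1 ≤ m then a ^ (n + m + 1) else k * b ^ (n + m + 1)) =
      a ^ m * b * b ^ n := by
    intro n
    rw [if_neg (by lia), ← hk]
    ring
  rw [hfin]
  simp only [htail]
  refine Eq.subst (motive := fun s => HasSum _ s) ?_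
    ((hasSum_geometric_of_lt_one hb₀ hb₁).mul_left (a ^ m * b))
  ring

/-- The value of a nonnegative double series from its row sums. -/
lemma hasSum_prod_of_nonneg {α β : Type*} {f : α × β → ℝ} {g : α → ℝ} {s : ℝ} (hf : 0 ≤ f)
    (hg : ∀ x, HasSum (fun y => f (x, y)) (g x)) (hs : HasSum g s) : HasSum f s := by
  have hsum : Summable f := (summable_prod_of_nonneg hf).2
    ⟨fun x => (hg x).summable, by simpa only [fun x => (hg x).tsum_eq] using hs.summable⟩
  exact (hsum.hasSum.prod_fiberwise hg).unique hs ▸ hsum.hasSum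

lemma zpow_mul_zpow_sub_min_eq {q t : ℝ} (hq : q ≠ 0) (ht : t ≠ 0) (X Y : ℕ) :
    q ^ (3 * (X : ℤ) - (Y : ℤ)) * t ^ (3 * (X : ℤ) - min (X : ℤ) (3 * (Y : ℤ))) =
      q⁻¹ ^ Y * if X ≤ 3 * Y then (q ^ 3 * t ^ 2) ^ X
        else (t ^ (3 * Y))⁻¹ * (q ^ 3 * t ^ 3) ^ X := by
  have hqpow : q ^ (3 * (X : ℤ) - (Y : ℤ)) = q⁻¹ ^ Y * (q ^ 3) ^ X := by
    rw [zpow_sub₀ hq, zpow_mul, zpow_natCast, zpow_natCast, inv_pow, div_eq_mul_inv, mul_comm]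
    rfl
  rw [hqpow]
  split_ifs with h
  · have htpow : t ^ (3 * (X : ℤ) - min (X : ℤ) (3 * (Y : ℤ))) = (t ^ 2) ^ X := by
      rw [min_eq_left (by lia), ← pow_mul, ← zpow_natCast]
      congr 1
      push_cast
      ring
    rw [htpow]
    ring
  · have htpow : t ^ (3 * (X : ℤ) - min (X : ℤ) (3 * (Y : ℤ))) =
        (t ^ (3 * Y))⁻¹ * (t ^ 3) ^ X := by
      rw [min_eq_right (by lia), zpow_sub₀ ht, div_eq_inv_mul, ← pow_mul, ← zpow_natCast,
        ← zpow_natCast]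
      push_cast
      rfl
    rw [htpow]
    ring

/-- Lemma 2.4: the integral I = ∫_{x,y∈𝔭} |x|^{3s-4} ‖x,y³‖^{-s} dμ, expressed as a
    double series, satisfies
    (1-q⁻¹)²·∑_{X,Y≥1} q^{3X-Y} t^{3X-min(X,3Y)}
    = (1-q⁻¹)·q²t²(1+q³t²-q³t³+q⁶t⁴-q⁶t⁵-q⁸t⁷)/((1-q³t³)(1-q⁸t⁶)). -/
theorem heisenberg_integral_I (q t : ℝ) (hq : 1 < q) (ht : 0 < t)
    (hqt : q ^ 3 * t ^ 2 < 1) :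
    ∃ S : ℝ,
      HasSum
        (fun p : ℕ+ × ℕ+ =>
          q ^ (3 * ((p.1 : ℕ) : ℤ) - ((p.2 : ℕ) : ℤ)) *
            t ^ (3 * ((p.1 : ℕ) : ℤ) - min ((p.1 : ℕ) : ℤ) (3 * ((p.2 : ℕ) : ℤ))))
        S ∧
      (1 - q⁻¹) ^ 2 * S =
        (1 - q⁻¹) * (q ^ 2 * t ^ 2 *
            (1 + q ^ 3 * t ^ 2 - q ^ 3 * t ^ 3 + q ^ 6 * t ^ 4 - q ^ 6 * t ^ 5 -
              q ^ 8 * t ^ 7) /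
          ((1 - q ^ 3 * t ^ 3) * (1 - q ^ 8 * t ^ 6))) := by
  have hq₀ : 0 < q := by linarith
  have ht₁ : t < 1 := by
    by_contra! h
    have hq3 : 1 < q ^ 3 := one_lt_pow₀ hq (by norm_num)
    have ht2 : 1 ≤ t ^ 2 := one_le_pow₀ h
    nlinarith
  have hinv₁ : q⁻¹ < 1 := inv_lt_one_of_one_lt₀ hq
  have ha₀ : 0 < q ^ 3 * t ^ 2 := by positivity
  have hb₀ : 0 < q ^ 3 * t ^ 3 := by positivity
  have hb₁ : q ^ 3 * t ^ 3 < 1 := by nlinarith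
  have hc₀ : 0 < q ^ 8 * t ^ 6 := by positivity
  have hc : q ^ 8 * t ^ 6 = q⁻¹ * (q ^ 3 * t ^ 2) ^ 3 := by
    field_simp
  have hc₁ : q ^ 8 * t ^ 6 < 1 := by
    rw [hc]
    exact mul_lt_one_of_nonneg_of_lt_one_left (by positivity) hinv₁
      (pow_le_one₀ ha₀.le hqt.le)
  have hrow (Y : ℕ+) := (hasSum_pnat_piecewise_geometric (k := (t ^ (3 * (Y : ℕ)))⁻¹)
    (3 * (Y : ℕ)) hqt.ne hb₀.le hb₁ (by
      rw [inv_mul_eq_iff_eq_mul₀ (by positivity), ← mul_pow]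
      ring)).mul_left (q⁻¹ ^ (Y : ℕ))
  have hcol := ((hasSum_pnat_geometric (by positivity) hinv₁).mul_right
      (q ^ 3 * t ^ 2 / (1 - q ^ 3 * t ^ 2))).add
    ((hasSum_pnat_geometric hc₀.le hc₁).mul_right
      (q ^ 3 * t ^ 3 / (1 - q ^ 3 * t ^ 3) - q ^ 3 * t ^ 2 / (1 - q ^ 3 * t ^ 2)))
  refine ⟨_, (Equiv.prodComm ℕ+ ℕ+).hasSum_iff.1 (hasSum_prod_of_nonneg
    (fun p => ?_) (fun Y => ?_) hcol), ?_⟩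
  · simp only [Pi.zero_apply, Function.comp_apply]
    positivity
  · simp only [Function.comp_apply, Equiv.prodComm_apply, Prod.swap_prod_mk,
      zpow_mul_zpow_sub_min_eq hq₀.ne' ht.ne']
    refine Eq.subst (motive := fun s => HasSum _ s) ?_ (hrow Y)
    rw [hc]
    ring
  · have hq' : q - 1 ≠ 0 := by linarith
    have ha' : 1 - q ^ 3 * t ^ 2 ≠ 0 := by linarith
    have hb' : 1 - q ^ 3 * t ^ 3 ≠ 0 := by linarith
    have hc' : 1 - q ^ 8 * t ^ 6 ≠ 0 := by linarith
    have hi : q⁻¹ / (1 - q⁻¹) = 1 / (q - 1) := by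
      have : 1 - q⁻¹ ≠ 0 := by linarith
      field_simp
    rw [hi]
    field_simp
    ring
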